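/- The right real matrix representation Θ reverses the complex-quaternion product: for all pairs X = (x, y) and A = (a, b) of real quaternions, Θ(X·A) = Θ(A)·Θ(X), where X·A = (xa − y*b, x*b + ya). -/

import Mathlib

open Quaternion Matrix

noncomputable def rm (a : ℍ[ℝ]) : Matrix (Fin 4) (Fin 4) ℝ :=
  !![a.re, -a.imI, -a.imJ, -a.imK;
     a.imI, a.re, a.imK, -a.imJ;
     a.imJ, -a.imK, a.re, a.imI;
     a.imK, a.imJ, -a.imI, a.re]

/-- The star operation a* = a₀ + a₁e₁ − a₂e₂ − a₃e₃. -/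
noncomputable def st (a : ℍ[ℝ]) : ℍ[ℝ] := ⟨a.re, a.imI, -a.imJ, -a.imK⟩

/-- The right real matrix representation of the complex quaternion X = x + iy. -/
noncomputable def Theta (x y : ℍ[ℝ]) : Matrix (Fin 4 ⊕ Fin 4) (Fin 4 ⊕ Fin 4) ℝ :=
  Matrix.fromBlocks (rm x) (-(rm y)) (rm (st y)) (rm (st x))

theorem rm_mul_rev (x a : ℍ[ℝ]) : rm (x * a) = rm a * rm x := by
  ext i j
  fin_cases i <;> fin_cases j <;>
    simp [rm, Matrix.mul_apply, Fin.sum_univ_four] <;> ring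

theorem rm_add' (x a : ℍ[ℝ]) : rm (x + a) = rm x + rm a := by
  ext i j
  fin_cases i <;> fin_cases j <;> simp [rm] <;> ring

theorem rm_sub' (x a : ℍ[ℝ]) : rm (x - a) = rm x - rm a := by
  ext i j
  fin_cases i <;> fin_cases j <;> simp [rm] <;> ring

theorem st_re (x : ℍ[ℝ]) : (st x).re = x.re := rfl

theorem st_imI (x : ℍ[ℝ]) : (st x).imI = x.imI := rfl

theorem st_imJ (x : ℍ[ℝ]) : (st x).imJ = -x.imJ := rfl

theorem st_imK (x : ℍ[ℝ]) : (st x).imK = -x.imK := rfl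

theorem st_mul' (x a : ℍ[ℝ]) : st (x * a) = st x * st a := by
  ext <;> simp [st_re, st_imI, st_imJ, st_imK] <;> ring

theorem st_add' (x a : ℍ[ℝ]) : st (x + a) = st x + st a := by
  ext <;> simp [st_re, st_imI, st_imJ, st_imK] <;> ring

theorem st_sub' (x a : ℍ[ℝ]) : st (x - a) = st x - st a := by
  ext <;> simp [st_re, st_imI, st_imJ, st_imK] <;> ring

theorem st_st' (x : ℍ[ℝ]) : st (st x) = x := by
  ext <;> simp [st]

theorem Theta_mul (x y a b : ℍ[ℝ]) :
    Theta (x * a - st y * b) (st x * b + y * a) = Theta a b * Theta x y := by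
  unfold Theta
  rw [Matrix.fromBlocks_multiply]
  simp only [st_add', st_sub', st_mul', st_st', rm_add', rm_sub', rm_mul_rev, Matrix.neg_mul, Matrix.mul_neg]
  congr 1 <;> abel
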